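/- Let n ≥ 3 and let x_1, …, x_n be distinct real numbers. For every ε > 0 there exists M > 0 such that for every θ ∈ ℍ with |Re θ| > M, or Im θ > M, or Im θ < 1/M, one has L(θ) < ε. Consequently, the Cauchy likelihood L attains its maximum over ℍ: there exists θ₀ ∈ ℍ with L(θ) ≤ L(θ₀) for all θ ∈ ℍ. -/

import Mathlib

open Complex Finset

/-- The Cauchy likelihood of the sample `x` at parameter `θ = μ + iσ`. -/
noncomputable def cauchyL {n : ℕ} (x : Fin n → ℝ) (θ : ℂ) : ℝ :=
  ∏ j, (θ.im / Real.pi) / ((x j - θ.re) ^ 2 + θ.im ^ 2)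

lemma sep_exists {n : ℕ} (x : Fin n → ℝ) (hx : Function.Injective x) :
    ∃ d : ℝ, 0 < d ∧ ∀ i j, i ≠ j → 2 * d ≤ |x i - x j| := by
  have h : ∀ᶠ d : ℝ in nhdsWithin 0 (Set.Ioi 0), ∀ i j, i ≠ j → 2 * d ≤ |x i - x j| := by
    rw [Filter.eventually_all]; intro i
    rw [Filter.eventually_all]; intro j
    by_cases hij : i = j
    · simp [hij]
    have hp : 0 < |x i - x j| / 2 := by
      have := abs_pos.2 (sub_ne_zero.2 (fun h => hij (hx h)))
      linarith
    filter_upwards [Ioo_mem_nhdsGT hp] with d hd _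
    linarith [hd.2]
  obtain ⟨d, h1, h2⟩ := (h.and self_mem_nhdsWithin).exists
  exact ⟨d, h2, h1⟩

lemma key_bound {n : ℕ} (hn : 3 ≤ n) (x : Fin n → ℝ) (hx : Function.Injective x) :
    ∃ d : ℝ, 0 < d ∧ ∀ θ : ℂ, 0 < θ.im → ∃ k : Fin n,
      cauchyL x θ ≤ (θ.im / ((x k - θ.re) ^ 2 + θ.im ^ 2)) *
        (θ.im / (d ^ 2 + θ.im ^ 2)) ^ (n - 1) := by
  obtain ⟨d, hd, hsep⟩ := sep_exists x hx
  refine ⟨d, hd, fun θ hs => ?_⟩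
  have : Nonempty (Fin n) := ⟨⟨0, by omega⟩⟩
  obtain ⟨k, -, hk⟩ := Finset.exists_min_image (Finset.univ : Finset (Fin n))
    (fun j => |x j - θ.re|) Finset.univ_nonempty
  refine ⟨k, ?_⟩
  have hpi : θ.im / Real.pi ≤ θ.im := div_le_self hs.le (by linarith [Real.pi_gt_three])
  have hpi0 : 0 < θ.im / Real.pi := div_pos hs Real.pi_pos
  unfold cauchyL
  rw [← Finset.mul_prod_erase _ _ (Finset.mem_univ k)]
  refine mul_le_mul (by gcongr) ?_ (Finset.prod_nonneg fun j _ => by positivity) (by positivity)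
  have hc : (Finset.univ.erase k).card = n - 1 := by simp
  rw [← hc, ← Finset.prod_const]
  refine Finset.prod_le_prod (fun j _ => by positivity) (fun j hj => ?_)
  have hjk : j ≠ k := Finset.ne_of_mem_erase hj
  have h1 := hsep j k hjk
  have h2 := hk j (Finset.mem_univ j)
  have h3 : |x j - x k| ≤ |x j - θ.re| + |x k - θ.re| := by
    have := abs_sub (x j - θ.re) (x k - θ.re)
    simpa using this
  have h4 : d ≤ |x j - θ.re| := by linarith
  have h5 : d ^ 2 ≤ (x j - θ.re) ^ 2 := by
    rw [← sq_abs (x j - θ.re)]; gcongr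
  gcongr

lemma bounds {n : ℕ} (hn : 3 ≤ n) (x : Fin n → ℝ) (hx : Function.Injective x) :
    ∃ K R : ℝ, 0 < K ∧ 0 ≤ R ∧ ∀ θ : ℂ, 0 < θ.im →
      cauchyL x θ ≤ K * θ.im ∧ cauchyL x θ ≤ K / θ.im ∧
      (R < |θ.re| → cauchyL x θ ≤ K * θ.im / (|θ.re| - R) ^ 2) := by
  obtain ⟨d, hd, H⟩ := key_bound hn x hx
  have hK1 : 0 < (1 / d) ^ (n - 1) := by positivity
  have hK2 : 0 < (1 / d) ^ (n - 3) * (1 / d ^ 2) ^ 2 := by positivity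
  refine ⟨(1 / d) ^ (n - 1) + (1 / d) ^ (n - 3) * (1 / d ^ 2) ^ 2, ∑ j, |x j|, by positivity,
    by positivity, fun θ hs => ?_⟩
  obtain ⟨k, hk⟩ := H θ hs
  set s := θ.im
  set K1 := (1 / d) ^ (n - 1)
  set K2 := (1 / d) ^ (n - 3) * (1 / d ^ 2) ^ 2 with hK2d
  set h := s / (d ^ 2 + s ^ 2) with hh
  have h0 : 0 < h := by positivity
  have hC : h ≤ 1 / d := by
    rw [hh, div_le_div_iff₀ (by positivity) hd]
    nlinarith [sq_nonneg (d - s), mul_pos hd hs]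
  have hS : h ≤ (1 / d ^ 2) * s := by
    rw [hh, div_mul_eq_mul_div, one_mul]
    gcongr
    nlinarith
  have hg : s / ((x k - θ.re) ^ 2 + s ^ 2) ≤ 1 / s := by
    rw [div_le_div_iff₀ (by positivity) hs]
    nlinarith [sq_nonneg (x k - θ.re)]
  have hp1 : h ^ (n - 1) ≤ K1 := pow_le_pow_left₀ h0.le hC _
  have hp2 : h ^ (n - 1) ≤ K2 * s ^ 2 := by
    have : n - 1 = (n - 3) + 2 := by omega
    rw [this, pow_add, hK2d, mul_assoc, ← mul_pow]
    gcongr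
  refine ⟨?_, ?_, fun hR => ?_⟩
  · calc _ ≤ _ := hk
      _ ≤ (1 / s) * (K2 * s ^ 2) := by gcongr
      _ = K2 * s := by field_simp
      _ ≤ _ := by gcongr; linarith
  · calc _ ≤ _ := hk
      _ ≤ (1 / s) * K1 := by gcongr
      _ = K1 / s := by ring
      _ ≤ _ := by gcongr; linarith
  · have hxk : |x k| ≤ ∑ j, |x j| :=
      Finset.single_le_sum (f := fun j => |x j|) (fun _ _ => abs_nonneg _) (Finset.mem_univ k)
    have h1 : |θ.re| - ∑ j, |x j| ≤ |x k - θ.re| := by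
      have := abs_sub_abs_le_abs_sub θ.re (x k)
      rw [abs_sub_comm] at this
      linarith
    have hpos : 0 < |θ.re| - ∑ j, |x j| := by linarith
    have h2 : (|θ.re| - ∑ j, |x j|) ^ 2 ≤ (x k - θ.re) ^ 2 + s ^ 2 := by
      rw [← sq_abs (x k - θ.re)]
      have : (|θ.re| - ∑ j, |x j|) ^ 2 ≤ |x k - θ.re| ^ 2 := by gcongr
      nlinarith
    calc _ ≤ _ := hk
      _ ≤ (s / (|θ.re| - ∑ j, |x j|) ^ 2) * K1 := by gcongr
      _ = K1 * s / (|θ.re| - ∑ j, |x j|) ^ 2 := by ring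
      _ ≤ _ := by gcongr; linarith

theorem stmt_5 (n : ℕ) (hn : 3 ≤ n) (x : Fin n → ℝ) (hx : Function.Injective x) :
    (∀ ε : ℝ, 0 < ε → ∃ M : ℝ, 0 < M ∧
      ∀ θ : ℂ, 0 < θ.im → (M < |θ.re| ∨ M < θ.im ∨ θ.im < 1 / M) →
        cauchyL x θ < ε) ∧
    ∃ θ₀ : ℂ, 0 < θ₀.im ∧ ∀ θ : ℂ, 0 < θ.im → cauchyL x θ ≤ cauchyL x θ₀ := by
  have A : ∀ ε : ℝ, 0 < ε → ∃ M : ℝ, 0 < M ∧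
      ∀ θ : ℂ, 0 < θ.im → (M < |θ.re| ∨ M < θ.im ∨ θ.im < 1 / M) →
        cauchyL x θ < ε := by
    obtain ⟨K, R, hK, hR, H⟩ := bounds hn x hx
    intro ε hε
    have hKe : 0 < K / ε := by positivity
    refine ⟨R + K / ε, by positivity, fun θ hs h => ?_⟩
    obtain ⟨h1, h2, h3⟩ := H θ hs
    have big : K / ε < θ.im → cauchyL x θ < ε := fun hb => by
      refine h2.trans_lt ?_
      rw [div_lt_iff₀ hε] at hb
      rw [div_lt_iff₀ hs]; linarith
    rcases h with h | h | h
    · by_cases hb : K / ε < θ.im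
      · exact big hb
      push Not at hb
      refine (h3 (by linarith)).trans_lt ?_
      have hq : K / ε < |θ.re| - R := by linarith
      have hq0 : 0 < |θ.re| - R := by linarith
      rw [div_lt_iff₀ (by positivity)]
      calc K * θ.im ≤ K * (K / ε) := by gcongr
        _ = ε * (K / ε) ^ 2 := by field_simp
        _ < _ := by gcongr
    · exact big (by linarith)
    · refine h1.trans_lt ?_
      have : θ.im < ε / K := by
        refine h.trans_le ?_
        rw [div_le_div_iff₀ (by positivity) hK, mul_add, mul_div_cancel₀ _ hε.ne']
        nlinarith [mul_nonneg hε.le hR]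
      rw [lt_div_iff₀ hK] at this
      linarith
  refine ⟨A, ?_⟩
  have hpos : 0 < cauchyL x Complex.I := by
    unfold cauchyL
    refine Finset.prod_pos fun j _ => ?_
    simp only [Complex.I_im, Complex.I_re]
    have := Real.pi_pos
    positivity
  obtain ⟨M, hM, H⟩ := A _ hpos
  have mem : ∀ θ : ℂ, 0 < θ.im → cauchyL x Complex.I ≤ cauchyL x θ →
      θ ∈ Set.Icc (-M) M ×ℂ Set.Icc (1 / M) M := by
    intro θ hs hle
    by_contra hc
    refine absurd (H θ hs ?_) (not_lt.2 hle)
    by_contra h2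
    push Not at h2
    exact hc ⟨abs_le.1 h2.1, h2.2.2, h2.2.1⟩
  have himpos : ∀ θ ∈ Set.Icc (-M) M ×ℂ Set.Icc (1 / M) M, 0 < θ.im := fun θ hθ =>
    lt_of_lt_of_le (by positivity) hθ.2.1
  have hI := mem Complex.I (by simp) le_rfl
  have hcomp : IsCompact (Set.Icc (-M) M ×ℂ Set.Icc (1 / M) M) :=
    isCompact_Icc.reProdIm isCompact_Icc
  have hcont : ContinuousOn (cauchyL x) (Set.Icc (-M) M ×ℂ Set.Icc (1 / M) M) := by
    unfold cauchyL
    refine continuousOn_finsetProd _ fun j _ => ?_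
    refine ContinuousOn.div (by fun_prop) (by fun_prop) fun θ hθ => ?_
    have := himpos θ hθ
    positivity
  obtain ⟨θ₀, h0, hmax⟩ := hcomp.exists_isMaxOn ⟨_, hI⟩ hcont
  refine ⟨θ₀, himpos θ₀ h0, fun θ hs => ?_⟩
  rcases le_total (cauchyL x Complex.I) (cauchyL x θ) with h | h
  · exact hmax (mem θ hs h)
  · exact h.trans (hmax hI)
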